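/- arXiv:math/0308238 — 6 statements merged into one kernel-verified Lean document; each statement's English description precedes it below -/
import Mathlib

section
/- There exists a constant C > 0 (depending only on d) such that for every k ≥ 2 and all g_1, …, g_k, h_1, …, h_k ∈ G(ℝ^d): d( g_1 ⊗ ⋯ ⊗ g_k , h_1 ⊗ ⋯ ⊗ h_k ) ≤ C Σ_{i=1}^k ( d(g_i, h_i) + √( d(g_i, h_i) · ‖ h_{i+1} ⊗ ⋯ ⊗ h_k ‖ ) ), where the product over an empty index range is the identity e. -/
/-!
The estimate holds with `C = 4`. Write `P = g₁ ⊗ P'` and `Q = h₁ ⊗ Q'`, and put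
`u = h₁⁻¹ ⊗ g₁`. Then `Q⁻¹ ⊗ P = (Q'⁻¹ ⊗ u ⊗ Q') ⊗ (Q'⁻¹ ⊗ P')`, so by subadditivity of the
homogeneous norm and induction on `k` it suffices to bound the norm of a conjugate
`q⁻¹ ⊗ u ⊗ q` (`gnorm_conj_le`). The group being of step 2, this conjugate equals `u ⊗ z` with
`z = (0, a bᵀ - b aᵀ)` central, where `a = u¹` and `b = q¹`. The element `z` is the commutator of
`exp (t a)` and `exp (t⁻¹ b)` for every `t ≠ 0`, and choosing `t` so that the two factors have
equal length gives `‖z‖ ≤ 4 √(|a| |b|)` (`gnorm_area_le`). Finally `|u¹| ≤ ‖u‖`.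

The infimum defining the norm is a real `sInf`, with value `0` on the empty set. Subadditivity and
`|g¹| ≤ ‖g‖` therefore need every group element to be a finite product of exponentials
(`exists_list`): up to the factor `exp g¹` an element is `(0, A)` with `A` antisymmetric, and
`A = ∑ᵢ (eᵢ (½Aᵢ)ᵀ - (½Aᵢ) eᵢᵀ)`, where `Aᵢ` is the `i`-th row, so `(0, A)` is a product of
commutators of exponentials.
-/

noncomputable section

open scoped BigOperators
open MeasureTheory Filter Matrix

namespace PaperFV

/-- `Vec d` is `ℝ^d`. -/
abbrev Vec (d : ℕ) := Fin d → ℝ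

/-- `Mat d` is the space of real `d × d` matrices. -/
abbrev Mat (d : ℕ) := Matrix (Fin d) (Fin d) ℝ

/-- The Euclidean norm on `ℝ^d`. -/
def enorm {d : ℕ} (x : Vec d) : ℝ := Real.sqrt (∑ i, (x i) ^ 2)

/-- The defining condition of the step-2 free nilpotent group over `ℝ^d`:
the symmetric part of the second component equals `½ g¹ (g¹)ᵀ`. -/
def IsG {d : ℕ} (g : Vec d × Mat d) : Prop :=
  g.2 + g.2ᵀ = Matrix.vecMulVec g.1 g.1

/-- The step-2 free nilpotent group `G(ℝ^d)`. -/
def G (d : ℕ) : Type := { g : Vec d × Mat d // IsG g }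

namespace G

variable {d : ℕ}

/-- Group multiplication `g ⊗ h = (g¹ + h¹, g² + g¹ (h¹)ᵀ + h²)`. -/
def mul (g h : G d) : G d :=
  ⟨(g.1.1 + h.1.1, g.1.2 + Matrix.vecMulVec g.1.1 h.1.1 + h.1.2), by
    have hg := g.2
    have hh := h.2
    simp only [IsG] at *
    ext i j
    have hg' := congrFun (congrFun hg i) j
    have hh' := congrFun (congrFun hh i) j
    simp only [Matrix.add_apply, Matrix.transpose_apply, Matrix.vecMulVec_apply,
      Pi.add_apply] at *
    nlinarith [hg', hh']⟩

/-- The identity element `e = (0, 0)`. -/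
def one : G d :=
  ⟨(0, 0), by
    ext i j
    simp [IsG, Matrix.vecMulVec_apply]⟩

/-- The inverse `g⁻¹ = (−g¹, g¹ (g¹)ᵀ − g²)`. -/
def inv (g : G d) : G d :=
  ⟨(-g.1.1, Matrix.vecMulVec g.1.1 g.1.1 - g.1.2), by
    have hg := g.2
    simp only [IsG] at *
    ext i j
    have hg' := congrFun (congrFun hg i) j
    simp only [Matrix.add_apply, Matrix.sub_apply, Matrix.transpose_apply,
      Matrix.vecMulVec_apply, Pi.neg_apply] at *
    nlinarith [hg']⟩

/-- `exp x = (x, ½ x xᵀ)`. -/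
def gexp (x : Vec d) : G d :=
  ⟨(x, (2⁻¹ : ℝ) • Matrix.vecMulVec x x), by
    ext i j
    simp only [IsG, Matrix.add_apply, Matrix.transpose_apply, Matrix.smul_apply,
      Matrix.vecMulVec_apply, smul_eq_mul]
    ring⟩

/-- The dilation `δ_t (g¹, g²) = (t g¹, t² g²)`. -/
def dil (t : ℝ) (g : G d) : G d :=
  ⟨(t • g.1.1, (t ^ 2) • g.1.2), by
    have hg := g.2
    simp only [IsG] at *
    ext i j
    have hg' := congrFun (congrFun hg i) j
    simp only [Matrix.add_apply, Matrix.transpose_apply, Matrix.smul_apply,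
      Matrix.vecMulVec_apply, Pi.smul_apply, smul_eq_mul] at *
    nlinarith [hg']⟩

/-- Product of a list of group elements. -/
def prodL : List (G d) → G d
  | [] => one
  | g :: l => mul g (prodL l)

/-- The homogeneous (Carnot–Carathéodory) norm:
`‖g‖ = inf { Σ |xᵢ| : exp(x₁) ⊗ ⋯ ⊗ exp(xₙ) = g }`. -/
def gnorm (g : G d) : ℝ :=
  sInf { r | ∃ l : List (Vec d), prodL (l.map gexp) = g ∧ r = (l.map enorm).sum }

/-- The left-invariant distance `d(g, h) = ‖h⁻¹ ⊗ g‖`. -/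
def gdist (g h : G d) : ℝ := gnorm (mul (inv h) g)

end G

open G

/-- A continuous `G(ℝ^d)`-valued path on `[0,1]` started at the identity. -/
def IsPath {d : ℕ} (x : ℝ → G d) : Prop :=
  ContinuousOn (fun t => (x t).1) (Set.Icc 0 1) ∧ x 0 = one

/-- The increment `x_{s,t} = x_s⁻¹ ⊗ x_t`. -/
def inc {d : ℕ} (x : ℝ → G d) (s t : ℝ) : G d := mul (inv (x s)) (x t)

/-- The set of values whose supremum is `d_∞(x,y)`. -/
def dInfSet {d : ℕ} (x y : ℝ → G d) : Set ℝ :=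
  { r | ∃ s t : ℝ, 0 ≤ s ∧ s < t ∧ t ≤ 1 ∧
      r = gnorm (mul (inv (inc x s t)) (inc y s t)) }

/-- `d_∞(x,y) = sup_{0 ≤ s < t ≤ 1} ‖x_{s,t}⁻¹ ⊗ y_{s,t}‖`. -/
def dInf {d : ℕ} (x y : ℝ → G d) : ℝ := sSup (dInfSet x y)

/-- The set of values whose supremum is `d_φ(x,y)`. -/
def dPhiSet {d : ℕ} (φ : ℝ → ℝ) (x y : ℝ → G d) : Set ℝ :=
  { r | ∃ s t : ℝ, 0 ≤ s ∧ s < t ∧ t ≤ 1 ∧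
      r = gnorm (mul (inv (inc x s t)) (inc y s t)) / φ (t - s) }

/-- `d_φ(x,y) = sup_{0 ≤ s < t ≤ 1} ‖x_{s,t}⁻¹ ⊗ y_{s,t}‖ / φ(t-s)`. -/
def dPhi {d : ℕ} (φ : ℝ → ℝ) (x y : ℝ → G d) : ℝ := sSup (dPhiSet φ x y)

/-- The set of values whose supremum is `‖x‖_φ`. -/
def normPhiSet {d : ℕ} (φ : ℝ → ℝ) (x : ℝ → G d) : Set ℝ :=
  { r | ∃ s t : ℝ, 0 ≤ s ∧ s < t ∧ t ≤ 1 ∧ r = gnorm (inc x s t) / φ (t - s) }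

/-- `‖x‖_φ = sup_{0 ≤ s < t ≤ 1} ‖x_{s,t}‖ / φ(t-s)`. -/
def normPhi {d : ℕ} (φ : ℝ → ℝ) (x : ℝ → G d) : ℝ := sSup (normPhiSet φ x)

/-- `‖x‖_∞ = sup_{0 ≤ s < t ≤ 1} ‖x_{s,t}‖`. -/
def normInf {d : ℕ} (x : ℝ → G d) : ℝ :=
  sSup { r | ∃ s t : ℝ, 0 ≤ s ∧ s < t ∧ t ≤ 1 ∧ r = gnorm (inc x s t) }

/-- The class `Ξ_p` of functions `φ : [0,1] → [0,∞)` with `φ(0) = 0` such that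
`φ^p` is strictly increasing and convex. -/
def Xi (p : ℝ) (φ : ℝ → ℝ) : Prop :=
  φ 0 = 0 ∧ (∀ x ∈ Set.Icc (0:ℝ) 1, 0 ≤ φ x) ∧
    StrictMonoOn (fun x => φ x ^ p) (Set.Icc (0:ℝ) 1) ∧
    ConvexOn ℝ (Set.Icc (0:ℝ) 1) (fun x => φ x ^ p)

/-- `ζ(x) = (1/(2√2)) ∫₀^x √( log(1 + 1/u²) / u ) du`. -/
def zeta (x : ℝ) : ℝ :=
  (1 / (2 * Real.sqrt 2)) * ∫ u in (0:ℝ)..x, Real.sqrt (Real.log (1 + 1 / u ^ 2) / u)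

/-- The smallest convex function on `[0,1]` dominating `ζ^p`. -/
def convEnv (p : ℝ) (x : ℝ) : ℝ :=
  sInf { y | ∃ g : ℝ → ℝ, ConvexOn ℝ (Set.Icc (0:ℝ) 1) g ∧
    (∀ z ∈ Set.Icc (0:ℝ) 1, zeta z ^ p ≤ g z) ∧ y = g x }

/-- `φ_p`, the `p`-th root of the smallest convex function on `[0,1]` dominating `ζ^p`. -/
def phiP (p : ℝ) (x : ℝ) : ℝ := convEnv p x ^ (1 / p)

/-- The piecewise "linear" (with dilated increments) dyadic approximation `Υ_n(x)`:
`Υ_n(x)_{k/2ⁿ + t} = x_{k/2ⁿ} ⊗ δ_{2ⁿ t}(x_{k/2ⁿ, (k+1)/2ⁿ})` for `t ∈ [0, 2⁻ⁿ]`. -/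
def upsilon {d : ℕ} (n : ℕ) (x : ℝ → G d) : ℝ → G d := fun u =>
  let k : ℤ := ⌊(2 : ℝ) ^ n * u⌋
  mul (x ((k : ℝ) / 2 ^ n))
    (dil ((2 : ℝ) ^ n * u - (k : ℝ)) (inc x ((k : ℝ) / 2 ^ n) (((k : ℝ) + 1) / 2 ^ n)))


namespace G

variable {d : ℕ}

/-! ### The group law in coordinates -/

theorem ext_entries {g h : G d} (h1 : ∀ i, g.1.1 i = h.1.1 i)
    (h2 : ∀ i j, g.1.2 i j = h.1.2 i j) : g = h := by
  apply Subtype.ext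
  apply Prod.ext
  · exact funext h1
  · ext i j
    exact h2 i j

theorem mul_fst (g h : G d) (i : Fin d) : (mul g h).1.1 i = g.1.1 i + h.1.1 i := rfl

theorem mul_snd (g h : G d) (i j : Fin d) :
    (mul g h).1.2 i j = g.1.2 i j + g.1.1 i * h.1.1 j + h.1.2 i j := rfl

theorem inv_fst (g : G d) (i : Fin d) : (inv g).1.1 i = - g.1.1 i := rfl

theorem inv_snd (g : G d) (i j : Fin d) :
    (inv g).1.2 i j = g.1.1 i * g.1.1 j - g.1.2 i j := rfl

theorem one_fst (i : Fin d) : (one : G d).1.1 i = 0 := rfl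

theorem one_snd (i j : Fin d) : (one : G d).1.2 i j = 0 := rfl

theorem gexp_fst (x : Vec d) (i : Fin d) : (gexp x).1.1 i = x i := rfl

theorem gexp_snd (x : Vec d) (i j : Fin d) : (gexp x).1.2 i j = 2⁻¹ * (x i * x j) := rfl

theorem mul_assoc' (a b c : G d) : mul (mul a b) c = mul a (mul b c) := by
  apply ext_entries
  · intro i; simp only [mul_fst]; ring
  · intro i j; simp only [mul_fst, mul_snd]; ring

theorem one_mul' (a : G d) : mul one a = a := by
  apply ext_entries
  · intro i; simp only [mul_fst, one_fst]; ring
  · intro i j; simp only [mul_snd, one_fst, one_snd]; ring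

theorem inv_mul' (a : G d) : mul (inv a) a = one := by
  apply ext_entries
  · intro i; simp only [mul_fst, inv_fst, one_fst]; ring
  · intro i j; simp only [mul_snd, inv_fst, inv_snd, one_snd]; ring

theorem prodL_append (l m : List (G d)) : prodL (l ++ m) = mul (prodL l) (prodL m) := by
  induction l with
  | nil => exact (one_mul' _).symm
  | cons a l ih => simp only [List.cons_append, prodL, mul_assoc', ih]

/-! ### Exponentials generate the group -/

/-- The central element `(0, a bᵀ - b aᵀ)`. -/
def area (a b : Vec d) : G d :=
  ⟨(0, Matrix.vecMulVec a b - Matrix.vecMulVec b a), by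
    ext i j
    simp only [Matrix.add_apply, Matrix.sub_apply, Matrix.transpose_apply,
      Matrix.vecMulVec_apply, Pi.zero_apply]
    ring⟩

theorem area_fst (a b : Vec d) (i : Fin d) : (area a b).1.1 i = 0 := rfl

theorem area_snd (a b : Vec d) (i j : Fin d) :
    (area a b).1.2 i j = a i * b j - b i * a j := rfl

/-- `area a b` is the commutator of `exp a` and `exp b`. -/
theorem area_eq_prodL (a b : Vec d) : prodL ([a, b, -a, -b].map gexp) = area a b := by
  apply ext_entries
  · intro i
    simp only [List.map, prodL, mul_fst, one_fst, gexp_fst, area_fst, Pi.neg_apply]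
    ring
  · intro i j
    simp only [List.map, prodL, mul_fst, mul_snd, one_fst, one_snd, gexp_fst, gexp_snd,
      area_snd, Pi.neg_apply]
    ring

/-- A sum of antisymmetric rank-two matrices `a bᵀ - b aᵀ` is realized by the product of the
corresponding commutators. -/
theorem exists_list_sum (a b : Fin d → Vec d) (s : Finset (Fin d)) :
    ∃ l : List (Vec d), (∀ i, (prodL (l.map gexp)).1.1 i = 0) ∧
      ∀ i j, (prodL (l.map gexp)).1.2 i j = ∑ p ∈ s, (a p i * b p j - b p i * a p j) := by
  induction s using Finset.induction_on with
  | empty => exact ⟨[], fun i => rfl, fun i j => rfl⟩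
  | insert p s hp ih =>
    obtain ⟨l, h1, h2⟩ := ih
    refine ⟨[a p, b p, -a p, -b p] ++ l, ?_, ?_⟩
    · intro i
      rw [List.map_append, prodL_append, area_eq_prodL, mul_fst, h1, area_fst, add_zero]
    · intro i j
      rw [List.map_append, prodL_append, area_eq_prodL, mul_snd, h1, h2, area_snd,
        Finset.sum_insert hp]
      ring

/-- The exponentials generate the group. -/
theorem exists_list (g : G d) : ∃ l : List (Vec d), prodL (l.map gexp) = g := by
  -- The matrix `A` below is `g²` without its symmetric part, hence antisymmetric.
  let A : Fin d → Fin d → ℝ := fun i j => g.1.2 i j - 2⁻¹ * (g.1.1 i * g.1.1 j)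
  have hA : ∀ i j, A i j + A j i = 0 := by
    intro i j
    have h : g.1.2 i j + g.1.2 j i = g.1.1 i * g.1.1 j := congrFun (congrFun g.2 i) j
    simp only [A]
    linarith [mul_comm (g.1.1 i) (g.1.1 j)]
  obtain ⟨l, h1, h2⟩ :=
    exists_list_sum (fun p => Pi.single p 1) (fun p j => A p j / 2) Finset.univ
  refine ⟨g.1.1 :: l, ?_⟩
  apply ext_entries
  · intro i
    rw [List.map_cons, prodL, mul_fst, h1, gexp_fst, add_zero]
  · intro i j
    have hs : ∑ p, ((Pi.single p 1 : Vec d) i * (A p j / 2) -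
        A p i / 2 * (Pi.single p 1 : Vec d) j) = A i j / 2 - A j i / 2 := by
      simp [Finset.sum_sub_distrib, Pi.single_apply]
    rw [List.map_cons, prodL, mul_snd, h1, h2, hs, gexp_snd]
    have := hA i j
    have hd : A i j = g.1.2 i j - 2⁻¹ * (g.1.1 i * g.1.1 j) := rfl
    linarith

/-! ### The Euclidean and homogeneous norms -/

theorem enorm_eq (x : Vec d) : enorm x = ‖WithLp.toLp 2 x‖ := by
  simp [enorm, EuclideanSpace.norm_eq]

theorem enorm_nonneg (x : Vec d) : 0 ≤ enorm x := Real.sqrt_nonneg _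

theorem enorm_add_le (x y : Vec d) : enorm (x + y) ≤ enorm x + enorm y := by
  simp only [enorm_eq, WithLp.toLp_add]
  exact norm_add_le _ _

theorem enorm_smul (t : ℝ) (x : Vec d) : enorm (t • x) = |t| * enorm x := by
  simp only [enorm_eq, WithLp.toLp_smul, norm_smul, Real.norm_eq_abs]

theorem enorm_neg (x : Vec d) : enorm (-x) = enorm x := by
  simp [enorm]

theorem eq_zero_of_enorm {x : Vec d} (h : enorm x = 0) : x = 0 := by
  rw [enorm_eq, norm_eq_zero] at h
  simpa using h

theorem sum_enorm_nonneg (l : List (Vec d)) : 0 ≤ (l.map enorm).sum := by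
  apply List.sum_nonneg
  simp only [List.mem_map, forall_exists_index, and_imp, forall_apply_eq_imp_iff₂]
  exact fun x _ => enorm_nonneg x

theorem gnorm_le (l : List (Vec d)) : gnorm (prodL (l.map gexp)) ≤ (l.map enorm).sum := by
  apply csInf_le
  · refine ⟨0, ?_⟩
    rintro r ⟨m, -, rfl⟩
    exact sum_enorm_nonneg m
  · exact ⟨l, rfl, rfl⟩

theorem le_gnorm {g : G d} {c : ℝ}
    (h : ∀ l : List (Vec d), prodL (l.map gexp) = g → c ≤ (l.map enorm).sum) : c ≤ gnorm g := by
  apply le_csInf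
  · obtain ⟨l, hl⟩ := exists_list g
    exact ⟨_, l, hl, rfl⟩
  · rintro r ⟨l, hl, rfl⟩
    exact h l hl

theorem gnorm_nonneg (g : G d) : 0 ≤ gnorm g := le_gnorm fun l _ => sum_enorm_nonneg l

theorem gnorm_one_le : gnorm (one : G d) ≤ 0 := gnorm_le []

theorem gnorm_mul_le (g h : G d) : gnorm (mul g h) ≤ gnorm g + gnorm h := by
  have key : gnorm (mul g h) - gnorm h ≤ gnorm g := by
    refine le_gnorm fun l hl => ?_
    have : gnorm (mul g h) - (l.map enorm).sum ≤ gnorm h := by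
      refine le_gnorm fun m hm => ?_
      have := gnorm_le (l ++ m)
      rw [List.map_append, prodL_append, hl, hm, List.map_append, List.sum_append] at this
      linarith
    linarith
  linarith

theorem enorm_fst_le (g : G d) : enorm g.1.1 ≤ gnorm g := by
  refine le_gnorm fun l hl => ?_
  subst hl
  induction l with
  | nil => simp [prodL, one, enorm]
  | cons a l ih =>
    have h := enorm_add_le a (prodL (l.map gexp)).1.1
    simp only [List.map_cons, List.sum_cons]
    exact h.trans (by linarith)

/-! ### Conjugation and products -/

theorem area_smul (a b : Vec d) {t : ℝ} (ht : t ≠ 0) : area (t • a) (t⁻¹ • b) = area a b := by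
  apply ext_entries
  · intro i; rfl
  · intro i j
    simp only [area_snd, Pi.smul_apply, smul_eq_mul]
    field_simp

theorem gnorm_area_le_add (a b : Vec d) : gnorm (area a b) ≤ 2 * (enorm a + enorm b) := by
  rw [← area_eq_prodL]
  refine (gnorm_le _).trans (le_of_eq ?_)
  simp only [List.map_cons, List.map_nil, List.sum_cons, List.sum_nil, enorm_neg]
  ring

theorem gnorm_area_le (a b : Vec d) : gnorm (area a b) ≤ 4 * √(enorm a * enorm b) := by
  have degenerate : area a b = one → gnorm (area a b) ≤ 4 * √(enorm a * enorm b) := by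
    intro h
    rw [h]
    exact gnorm_one_le.trans (by positivity)
  rcases (enorm_nonneg a).eq_or_lt with ha | ha
  · apply degenerate
    rw [eq_zero_of_enorm ha.symm]
    apply ext_entries <;> simp [area_fst, area_snd, one_fst, one_snd]
  rcases (enorm_nonneg b).eq_or_lt with hb | hb
  · apply degenerate
    rw [eq_zero_of_enorm hb.symm]
    apply ext_entries <;> simp [area_fst, area_snd, one_fst, one_snd]
  -- The factor `t = √|b| / √|a|` makes `t • a` and `t⁻¹ • b` both of length `√|a| * √|b|`.
  have hsa := Real.sqrt_pos.2 ha
  have hsb := Real.sqrt_pos.2 hb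
  have ht : 0 < √(enorm b) / √(enorm a) := div_pos hsb hsa
  have h := gnorm_area_le_add ((√(enorm b) / √(enorm a)) • a) ((√(enorm b) / √(enorm a))⁻¹ • b)
  rw [area_smul a b ht.ne', enorm_smul, enorm_smul, abs_of_pos ht, abs_of_pos (inv_pos.2 ht)] at h
  refine h.trans (le_of_eq ?_)
  have e1 : √(enorm b) / √(enorm a) * enorm a = √(enorm a) * √(enorm b) := by
    nth_rewrite 2 [← Real.mul_self_sqrt ha.le]
    field_simp
  have e2 : (√(enorm b) / √(enorm a))⁻¹ * enorm b = √(enorm a) * √(enorm b) := by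
    nth_rewrite 2 [← Real.mul_self_sqrt hb.le]
    field_simp
  rw [e1, e2, Real.sqrt_mul ha.le]
  ring

theorem conj_eq (u q : G d) : mul (inv q) (mul u q) = mul u (area u.1.1 q.1.1) := by
  apply ext_entries
  · intro i; simp only [mul_fst, inv_fst, area_fst]; ring
  · intro i j
    simp only [mul_fst, mul_snd, inv_fst, inv_snd, area_fst, area_snd]
    ring

theorem gnorm_conj_le (u q : G d) :
    gnorm (mul (inv q) (mul u q)) ≤ 4 * (gnorm u + √(gnorm u * gnorm q)) := by
  rw [conj_eq]
  have h1 := gnorm_mul_le u (area u.1.1 q.1.1)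
  have h2 := gnorm_area_le u.1.1 q.1.1
  have h3 : √(enorm u.1.1 * enorm q.1.1) ≤ √(gnorm u * gnorm q) :=
    Real.sqrt_le_sqrt (mul_le_mul (enorm_fst_le u) (enorm_fst_le q) (enorm_nonneg _)
      (gnorm_nonneg _))
  have h4 := gnorm_nonneg u
  linarith

/-- The telescoping identity behind the induction: the distance of two products splits into a
conjugate of `h⁻¹ ⊗ g` and the distance of the tails. -/
theorem inv_mul_mul_eq (g h p q : G d) :
    mul (inv (mul h q)) (mul g p) =
      mul (mul (inv q) (mul (mul (inv h) g) q)) (mul (inv q) p) := by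
  apply ext_entries
  · intro i; simp only [mul_fst, inv_fst]; ring
  · intro i j
    simp only [mul_fst, mul_snd, inv_fst, inv_snd]
    ring

theorem gdist_prodL_ofFn_le (k : ℕ) (g h : Fin k → G d) :
    gdist (prodL (List.ofFn g)) (prodL (List.ofFn h)) ≤
      4 * ∑ i : Fin k, (gdist (g i) (h i) +
        √(gdist (g i) (h i) * gnorm (prodL ((List.ofFn h).drop ((i : ℕ) + 1))))) := by
  induction k with
  | zero =>
    simp only [List.ofFn_zero, prodL, gdist, inv_mul', Finset.univ_eq_empty, Finset.sum_empty,
      mul_zero]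
    exact gnorm_one_le
  | succ k ih =>
    have ih_tail := ih (fun i => g i.succ) (fun i => h i.succ)
    rw [Fin.sum_univ_succ, mul_add]
    simp only [List.ofFn_succ, prodL, List.drop_succ_cons, Fin.val_zero, Fin.val_succ,
      List.drop_zero]
    rw [gdist, inv_mul_mul_eq]
    exact (gnorm_mul_le _ _).trans (add_le_add (gnorm_conj_le _ _) ih_tail)

end G

/-- Distance between two products of `k ≥ 2` group elements. -/
theorem gdist_prod_le (d : ℕ) (hd : 2 ≤ d) :
    ∃ C : ℝ, 0 < C ∧ ∀ k : ℕ, 2 ≤ k → ∀ g h : Fin k → G d,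
      gdist (prodL (List.ofFn g)) (prodL (List.ofFn h)) ≤
        C * ∑ i : Fin k, (gdist (g i) (h i) +
          Real.sqrt (gdist (g i) (h i) *
            gnorm (prodL ((List.ofFn h).drop ((i : ℕ) + 1))))) := by
  exact ⟨4, by norm_num, fun k _ g h => gdist_prodL_ofFn_le k g h⟩

end PaperFV
end
end

section
/- There exists a constant C > 0 such that for all x, y ∈ [0,1]: ζ(x y) ≤ C ζ(x) ζ(y), where ζ(x) = (1/(2√2)) ∫₀^x √( log(1 + 1/u²) / u ) du. -/
/-!
Write `f(u) = √(log(1 + 1/u²) / u)` for the integrand and `I(x) = ∫₀ˣ f`. Substituting `u = y v`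
gives `I(xy) = y ∫₀ˣ f(y v) dv`. For `y, v ∈ (0, 1]`,
`log(1 + 1/(yv)²) ≤ log(1 + 1/y²) + log(1 + 1/v²)`, and both terms are at least `log 2 ≥ 1/2`, so
the sum is at most four times the product, whence `f(y v) ≤ 2 f(y) f(v)`
(`zetaDensity_mul_le`). Therefore `I(xy) ≤ 2 y f(y) I(x)`, and `y f(y) ≤ I(y)` because `f` is
decreasing (`mul_zetaDensity_le_integral`). Integrability of `f` at `0` follows from
`f(u) ≤ 3 u^(-3/4)` (`zetaDensity_le_rpow`).
-/

noncomputable section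

open scoped BigOperators
open MeasureTheory Filter Matrix

namespace PaperFV

open G

/-- The integrand `√(log(1 + 1/u²) / u)` of `zeta`. -/
def zetaDensity (u : ℝ) : ℝ := Real.sqrt (Real.log (1 + 1 / u ^ 2) / u)

lemma zetaDensity_antitone {u v : ℝ} (hu : 0 < u) (huv : u ≤ v) :
    zetaDensity v ≤ zetaDensity u := by
  have hv : 0 < v := hu.trans_le huv
  unfold zetaDensity
  have h : 0 ≤ Real.log (1 + 1 / u ^ 2) :=
    Real.log_nonneg (le_add_of_nonneg_right (by positivity))
  gcongr

lemma half_le_log {u : ℝ} (hu : 0 < u) (hu1 : u ≤ 1) : 1 / 2 ≤ Real.log (1 + 1 / u ^ 2) := by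
  have h1 : (1 : ℝ) ≤ 1 / u ^ 2 := by
    rw [le_div_iff₀ (by positivity)]
    nlinarith
  have h2 : Real.log 2 ≤ Real.log (1 + 1 / u ^ 2) :=
    Real.log_le_log (by norm_num) (by linarith)
  linarith [Real.log_two_gt_d9]

/-- Submultiplicativity of the density up to a constant: the logarithm is subadditive under
`(y, v) ↦ y v`, and a sum of two numbers `≥ 1/2` is at most four times their product. -/
lemma zetaDensity_mul_le {y v : ℝ} (hy : 0 < y) (hy1 : y ≤ 1) (hv : 0 < v) (hv1 : v ≤ 1) :
    zetaDensity (y * v) ≤ 2 * zetaDensity y * zetaDensity v := by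
  have ha := half_le_log hy hy1
  have hb := half_le_log hv hv1
  have hlog : Real.log (1 + 1 / (y * v) ^ 2) ≤
      Real.log (1 + 1 / y ^ 2) + Real.log (1 + 1 / v ^ 2) := by
    rw [← Real.log_mul (by positivity) (by positivity)]
    apply Real.log_le_log (by positivity)
    have h1 : 0 ≤ 1 / y ^ 2 := by positivity
    have h2 : 0 ≤ 1 / v ^ 2 := by positivity
    have h3 : 1 / (y * v) ^ 2 = 1 / y ^ 2 * (1 / v ^ 2) := by field_simp
    rw [h3]
    nlinarith
  have hprod : Real.log (1 + 1 / (y * v) ^ 2) ≤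
      4 * (Real.log (1 + 1 / y ^ 2) * Real.log (1 + 1 / v ^ 2)) := by
    nlinarith
  have h4 : (2 : ℝ) = Real.sqrt 4 := by
    rw [show (4 : ℝ) = 2 ^ 2 by norm_num, Real.sqrt_sq (by norm_num)]
  unfold zetaDensity
  rw [h4, ← Real.sqrt_mul (by norm_num), ← Real.sqrt_mul (by positivity)]
  apply Real.sqrt_le_sqrt
  calc Real.log (1 + 1 / (y * v) ^ 2) / (y * v)
      ≤ 4 * (Real.log (1 + 1 / y ^ 2) * Real.log (1 + 1 / v ^ 2)) / (y * v) := by gcongr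
    _ = _ := by field_simp

/-- Near `0` the logarithm is `O(u^(-1/2))`, so the density is `O(u^(-3/4))`. -/
lemma zetaDensity_le_rpow {u : ℝ} (hu : 0 < u) (hu1 : u ≤ 1) :
    zetaDensity u ≤ 3 * u ^ (-(3 / 4) : ℝ) := by
  have hpos : 0 < u ^ (-(1 / 2) : ℝ) := Real.rpow_pos_of_pos hu _
  have hge : 1 ≤ u ^ (-(1 / 2) : ℝ) :=
    Real.one_le_rpow_of_pos_of_le_one_of_nonpos hu hu1 (by norm_num)
  have hlog : Real.log (1 + 1 / u ^ 2) ≤ 9 * u ^ (-(1 / 2) : ℝ) := by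
    have h1 : 1 + 1 / u ^ 2 ≤ 2 * (1 / u ^ 2) := by
      have : (1 : ℝ) ≤ 1 / u ^ 2 := by
        rw [le_div_iff₀ (by positivity)]
        nlinarith
      linarith
    have h2 : Real.log (2 * (1 / u ^ 2)) = Real.log 2 + 4 * Real.log (u ^ (-(1 / 2) : ℝ)) := by
      rw [Real.log_mul (by norm_num) (by positivity), Real.log_rpow hu, one_div, Real.log_inv,
        Real.log_pow]
      push_cast
      ring
    have h3 := Real.log_le_log (by positivity) h1
    have h4 := Real.log_le_sub_one_of_pos hpos
    linarith [Real.log_two_lt_d9]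
  have hsq : 3 * u ^ (-(3 / 4) : ℝ) = Real.sqrt ((3 * u ^ (-(3 / 4) : ℝ)) ^ 2) :=
    (Real.sqrt_sq (by positivity)).symm
  rw [hsq]
  apply Real.sqrt_le_sqrt
  rw [div_le_iff₀ hu]
  have h5 : (3 * u ^ (-(3 / 4) : ℝ)) ^ 2 * u = 9 * u ^ (-(1 / 2) : ℝ) := by
    rw [mul_pow, ← Real.rpow_natCast (u ^ (-(3 / 4) : ℝ)), ← Real.rpow_mul hu.le, mul_assoc,
      ← Real.rpow_add_one hu.ne']
    norm_num
  rw [h5]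
  exact hlog

lemma zetaDensity_intervalIntegrable {x : ℝ} (hx : 0 ≤ x) (hx1 : x ≤ 1) :
    IntervalIntegrable zetaDensity volume 0 x := by
  have hg : IntervalIntegrable (fun u : ℝ => 3 * u ^ (-(3 / 4) : ℝ)) volume 0 x :=
    (intervalIntegral.intervalIntegrable_rpow' (by norm_num)).const_mul 3
  have hm : Measurable zetaDensity := by
    unfold zetaDensity
    fun_prop
  refine hg.mono_fun' hm.aestronglyMeasurable ?_
  rw [Set.uIoc_of_le hx]
  filter_upwards [ae_restrict_mem measurableSet_Ioc] with u hu
  rw [Real.norm_of_nonneg (show 0 ≤ zetaDensity u from Real.sqrt_nonneg _)]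
  exact zetaDensity_le_rpow hu.1 (hu.2.trans hx1)

lemma mul_zetaDensity_le_integral {y : ℝ} (hy : 0 < y) (hy1 : y ≤ 1) :
    y * zetaDensity y ≤ ∫ u in (0 : ℝ)..y, zetaDensity u := by
  have h := intervalIntegral.integral_mono_on_of_le_Ioo hy.le
    (intervalIntegrable_const (c := zetaDensity y)) (zetaDensity_intervalIntegrable hy.le hy1)
    (fun u hu => zetaDensity_antitone hu.1 hu.2.le)
  simpa using h

lemma integral_zetaDensity_mul_le {x y : ℝ} (hx : 0 ≤ x) (hx1 : x ≤ 1) (hy : 0 ≤ y)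
    (hy1 : y ≤ 1) :
    ∫ u in (0 : ℝ)..(x * y), zetaDensity u ≤
      2 * (∫ u in (0 : ℝ)..x, zetaDensity u) * ∫ u in (0 : ℝ)..y, zetaDensity u := by
  rcases hy.eq_or_lt with rfl | hy0
  · simp
  have hsubst : y * ∫ v in (0 : ℝ)..x, zetaDensity (y * v) =
      ∫ u in (0 : ℝ)..(x * y), zetaDensity u := by
    rw [intervalIntegral.mul_integral_comp_mul_left, mul_zero, mul_comm x y]
  have hint : IntervalIntegrable (fun v => zetaDensity (y * v)) volume 0 x := by
    have h := (zetaDensity_intervalIntegrable (mul_nonneg hy hx)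
      (mul_le_one₀ hy1 hx hx1)).comp_mul_left (c := y)
    simpa [hy0.ne'] using h
  have hbound : ∫ v in (0 : ℝ)..x, zetaDensity (y * v) ≤
      2 * zetaDensity y * ∫ v in (0 : ℝ)..x, zetaDensity v := by
    rw [← intervalIntegral.integral_const_mul]
    exact intervalIntegral.integral_mono_on_of_le_Ioo hx hint
      ((zetaDensity_intervalIntegrable hx hx1).const_mul _)
      (fun v hv => zetaDensity_mul_le hy0 hy1 hv.1 (hv.2.le.trans hx1))
  have hI : 0 ≤ ∫ v in (0 : ℝ)..x, zetaDensity v :=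
    intervalIntegral.integral_nonneg hx fun _ _ => Real.sqrt_nonneg _
  calc ∫ u in (0 : ℝ)..(x * y), zetaDensity u
      = y * ∫ v in (0 : ℝ)..x, zetaDensity (y * v) := hsubst.symm
    _ ≤ y * (2 * zetaDensity y * ∫ v in (0 : ℝ)..x, zetaDensity v) := by gcongr
    _ = 2 * (∫ v in (0 : ℝ)..x, zetaDensity v) * (y * zetaDensity y) := by ring
    _ ≤ _ := by
      gcongr
      exact mul_zetaDensity_le_integral hy0 hy1

/-- `ζ(xy) ≤ C ζ(x) ζ(y)` for all `x, y ∈ [0,1]`. -/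
theorem zeta_mul_le :
    ∃ C : ℝ, 0 < C ∧ ∀ x y : ℝ, x ∈ Set.Icc (0 : ℝ) 1 → y ∈ Set.Icc (0 : ℝ) 1 →
      zeta (x * y) ≤ C * zeta x * zeta y := by
  -- `4√2 = 2 / c`, where `c = 1 / (2√2)` is the normalising factor of `zeta`.
  refine ⟨4 * Real.sqrt 2, by positivity, fun x y hx hy => ?_⟩
  have h := integral_zetaDensity_mul_le hx.1 hx.2 hy.1 hy.2
  change 1 / (2 * Real.sqrt 2) * (∫ u in (0 : ℝ)..(x * y), zetaDensity u) ≤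
    4 * Real.sqrt 2 * (1 / (2 * Real.sqrt 2) * ∫ u in (0 : ℝ)..x, zetaDensity u) *
      (1 / (2 * Real.sqrt 2) * ∫ u in (0 : ℝ)..y, zetaDensity u)
  calc 1 / (2 * Real.sqrt 2) * (∫ u in (0 : ℝ)..(x * y), zetaDensity u)
      ≤ 1 / (2 * Real.sqrt 2) * (2 * (∫ u in (0 : ℝ)..x, zetaDensity u) *
          ∫ u in (0 : ℝ)..y, zetaDensity u) := by gcongr
    _ = _ := by
      field_simp
      norm_num
      ring

end PaperFV
end
end

section
/- As x → 0⁺, ζ(x) is asymptotically equivalent to √(−x log x); that is, lim_{x→0⁺} ζ(x) / √( x log(1/x) ) = 1. -/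
/-!
The asymptotics of `zeta` follow from L'Hôpital's rule at `0⁺`. Both `zeta x` and
`g x = √(x log (1 / x))` tend to `0`. For `zeta` this holds because the integrand is dominated by
the integrable function `3 u ^ (-3/4)` on `(0, 1]` (`integrand_le`).

Write `l = log (1 / x)`, which tends to `∞`. Then `zeta' x = √(log (1 + 1 / x²) / x) / (2 √2)` by
the fundamental theorem of calculus, and `g' x = (l - 1) / (2 √(x l))`. Since
`log (1 + 1 / x²) = 2 l + log (1 + x²)`, the quotient of the derivatives is
`√(1 + log (1 + x²) / (2 l)) / (1 - 1 / l)` (`deriv_quotient`), which tends to `1`.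
-/

noncomputable section

open scoped BigOperators
open MeasureTheory Filter Matrix

namespace PaperFV

open G

/-- The integrand of `zeta` is `O(u ^ (-3/4))` near `0`, since `log y ≤ 2 √y`. -/
lemma integrand_le {u : ℝ} (hu : 0 < u) (hu1 : u ≤ 1) :
    Real.sqrt (Real.log (1 + 1 / u ^ 2) / u) ≤ 3 * u ^ (-(3 / 4) : ℝ) := by
  have h1 : Real.log (1 + 1 / u ^ 2) ≤ Real.log ((2 / u) ^ 2) := by
    apply Real.log_le_log (by positivity)
    have h : (1 : ℝ) ≤ 1 / u ^ 2 := by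
      rw [le_div_iff₀ (by positivity)]
      nlinarith
    have h' : (2 / u) ^ 2 = 4 * (1 / u ^ 2) := by ring
    linarith
  have h2 : Real.log (2 / u) ≤ 2 * (2 / u) ^ (1 / 2 : ℝ) := by
    have := Real.log_le_rpow_div (x := 2 / u) (ε := 1 / 2) (by positivity) (by norm_num)
    linarith
  have h3 : (2 / u) ^ (1 / 2 : ℝ) ≤ 2 * u ^ (-(1 / 2) : ℝ) := by
    rw [div_eq_mul_inv, Real.mul_rpow (by norm_num) (by positivity), Real.inv_rpow hu.le,
      ← Real.rpow_neg hu.le]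
    gcongr
    exact Real.rpow_le_self_of_one_le (by norm_num) (by norm_num)
  have h4 : Real.log (1 + 1 / u ^ 2) ≤ 8 * u ^ (-(1 / 2) : ℝ) := by
    rw [Real.log_pow] at h1
    push_cast at h1
    linarith
  have h5 : (3 * u ^ (-(3 / 4) : ℝ)) ^ 2 = 9 * u ^ (-(1 / 2) : ℝ) / u := by
    rw [mul_pow, ← Real.rpow_natCast (u ^ (-(3 / 4) : ℝ)), ← Real.rpow_mul hu.le, mul_div_assoc,
      ← Real.rpow_sub_one hu.ne']
    norm_num
  apply Real.sqrt_le_iff.2 ⟨by positivity, ?_⟩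
  rw [h5]
  gcongr
  have : 0 < u ^ (-(1 / 2) : ℝ) := by positivity
  linarith

lemma intervalIntegrable_integrand :
    IntervalIntegrable (fun u : ℝ => Real.sqrt (Real.log (1 + 1 / u ^ 2) / u)) volume 0 1 := by
  refine ((intervalIntegral.intervalIntegrable_rpow' (r := -(3 / 4)) (by norm_num)).const_mul
    3).mono_fun' (Measurable.aestronglyMeasurable (by fun_prop)) ?_
  rw [Set.uIoc_of_le zero_le_one]
  filter_upwards [ae_restrict_mem measurableSet_Ioc] with u hu
  rw [Real.norm_of_nonneg (Real.sqrt_nonneg _)]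
  exact integrand_le hu.1 hu.2

lemma tendsto_zeta_zero : Tendsto zeta (nhdsWithin 0 (Set.Ioi 0)) (nhds 0) := by
  have h := intervalIntegral.continuousOn_primitive_interval' intervalIntegrable_integrand
    Set.left_mem_uIcc
  rw [Set.uIcc_of_le zero_le_one] at h
  have h0 := (h 0 (by simp)).tendsto.const_mul (1 / (2 * Real.sqrt 2))
  simp only [intervalIntegral.integral_same, mul_zero] at h0
  rw [← nhdsWithin_Ioo_eq_nhdsGT (zero_lt_one (α := ℝ))]
  exact h0.mono_left (nhdsWithin_mono _ Set.Ioo_subset_Icc_self)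

lemma hasDerivAt_zeta {x : ℝ} (hx : 0 < x) (hx1 : x < 1) :
    HasDerivAt zeta
      (1 / (2 * Real.sqrt 2) * Real.sqrt (Real.log (1 + 1 / x ^ 2) / x)) x := by
  refine HasDerivAt.const_mul _ (intervalIntegral.integral_hasDerivAt_right ?_ ?_ ?_)
  · apply intervalIntegrable_integrand.mono_set
    rw [Set.uIcc_of_le hx.le, Set.uIcc_of_le zero_le_one]
    exact Set.Icc_subset_Icc_right hx1.le
  · exact (Measurable.stronglyMeasurable (by fun_prop)).stronglyMeasurableAtFilter
  · have h1 : x ^ 2 ≠ 0 := by positivity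
    have h2 : 1 + 1 / x ^ 2 ≠ 0 := by positivity
    have h3 : x ≠ 0 := hx.ne'
    fun_prop (disch := assumption)

lemma hasDerivAt_sqrt_mul_log {x : ℝ} (hx : 0 < x) (hx1 : x < 1) :
    HasDerivAt (fun x : ℝ => Real.sqrt (x * Real.log (1 / x)))
      ((-Real.log x - 1) / (2 * Real.sqrt (x * -Real.log x))) x := by
  simp only [one_div, Real.log_inv]
  have hl : 0 < -Real.log x := neg_pos.2 (Real.log_neg hx hx1)
  refine HasDerivAt.sqrt ?_ (by positivity)
  refine ((hasDerivAt_id x).mul (Real.hasDerivAt_log hx.ne').neg).congr_deriv ?_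
  simp
  field_simp
  ring

/-- With `l = log (1 / x)`, one has `log (1 + 1 / x²) = 2 l + log (1 + x²)`, so the quotient of the
derivatives is `√(1 + log (1 + x²) / (2 l)) / (1 - 1 / l)`. -/
lemma deriv_quotient {x : ℝ} (hx : 0 < x) (hx1 : x < Real.exp (-1)) :
    (1 / (2 * Real.sqrt 2) * Real.sqrt (Real.log (1 + 1 / x ^ 2) / x)) /
        ((-Real.log x - 1) / (2 * Real.sqrt (x * -Real.log x))) =
      Real.sqrt (1 + Real.log (1 + x ^ 2) / 2 * (-Real.log x)⁻¹) / (1 - (-Real.log x)⁻¹) := by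
  have hl : 1 < -Real.log x := by
    have := (Real.log_lt_iff_lt_exp hx).2 hx1
    linarith
  have hL : Real.log (1 + 1 / x ^ 2) = 2 * -Real.log x + Real.log (1 + x ^ 2) := by
    have h : 1 + 1 / x ^ 2 = (1 + x ^ 2) / x ^ 2 := by field_simp; ring
    rw [h, Real.log_div (by positivity) (by positivity), Real.log_pow]
    push_cast
    ring
  have hr : 0 ≤ Real.log (1 + x ^ 2) := Real.log_nonneg (by nlinarith)
  rw [hL]
  set l := -Real.log x
  set r := Real.log (1 + x ^ 2)
  have hl0 : 0 < l := by linarith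
  have key : Real.sqrt ((2 * l + r) / x) * Real.sqrt (x * l) =
      Real.sqrt 2 * l * Real.sqrt (1 + r / 2 * l⁻¹) := by
    rw [← Real.sqrt_mul (by positivity)]
    have : (2 * l + r) / x * (x * l) = 2 * l ^ 2 * (1 + r / 2 * l⁻¹) := by
      field_simp
    rw [this, Real.sqrt_mul (by positivity), Real.sqrt_mul (by positivity), Real.sqrt_sq hl0.le]
  have h1 : l - 1 ≠ 0 := by linarith
  have h2 : 1 - l⁻¹ = (l - 1) / l := by field_simp
  rw [h2, div_div_eq_mul_div, div_div_eq_mul_div, div_left_inj' h1]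
  have h3 : Real.sqrt 2 ≠ 0 := by positivity
  calc _ = (Real.sqrt ((2 * l + r) / x) * Real.sqrt (x * l)) / Real.sqrt 2 := by
        field_simp
    _ = _ := by rw [key]; field_simp

/-- `ζ(x) ∼ √(−x log x)` as `x → 0⁺`. -/
theorem zeta_asymptotic :
    Tendsto (fun x : ℝ => zeta x / Real.sqrt (x * Real.log (1 / x)))
      (nhdsWithin 0 (Set.Ioi 0)) (nhds 1) := by
  have hev : ∀ᶠ x : ℝ in nhdsWithin 0 (Set.Ioi 0), 0 < x ∧ x < Real.exp (-1) :=
    Ioo_mem_nhdsGT (Real.exp_pos _)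
  have he : Real.exp (-1) < 1 := by simp
  refine HasDerivAt.lhopital_zero_nhdsGT
    (hev.mono fun x hx => hasDerivAt_zeta hx.1 (hx.2.trans he))
    (hev.mono fun x hx => hasDerivAt_sqrt_mul_log hx.1 (hx.2.trans he)) ?_
    tendsto_zeta_zero ?_ ?_
  · filter_upwards [hev] with x hx
    have hl : 1 < -Real.log x := by
      have := (Real.log_lt_iff_lt_exp hx.1).2 hx.2
      linarith
    have h1 : 0 < -Real.log x - 1 := by linarith
    have h2 : 0 < x * -Real.log x := mul_pos hx.1 (by linarith)
    positivity
  · have hc : Continuous fun x : ℝ => Real.sqrt (-(x * Real.log x)) :=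
      Real.continuous_sqrt.comp Real.continuous_mul_log.neg
    have := (hc.tendsto 0).mono_left (nhdsWithin_le_nhds (s := Set.Ioi 0))
    simpa using this
  · refine Tendsto.congr' (hev.mono fun x hx => (deriv_quotient hx.1 hx.2).symm) ?_
    have hinv : Tendsto (fun x : ℝ => (-Real.log x)⁻¹) (nhdsWithin 0 (Set.Ioi 0)) (nhds 0) :=
      tendsto_inv_atTop_zero.comp (tendsto_neg_atBot_atTop.comp Real.tendsto_log_nhdsGT_zero)
    have hr : Tendsto (fun x : ℝ => Real.log (1 + x ^ 2) / 2)
        (nhdsWithin 0 (Set.Ioi 0)) (nhds 0) := by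
      have hc : ContinuousAt (fun x : ℝ => Real.log (1 + x ^ 2) / 2) 0 :=
        ((by fun_prop : ContinuousAt (fun x : ℝ => 1 + x ^ 2) 0).log (by norm_num)).div_const 2
      have := hc.tendsto.mono_left (nhdsWithin_le_nhds (s := Set.Ioi 0))
      simpa using this
    have := ((hr.mul hinv).const_add 1).sqrt.div (hinv.const_sub 1) (by norm_num)
    simpa [Pi.div_def] using this

end PaperFV
end
end

section
/- There exists a constant C > 0 (depending only on p) such that for all α ∈ (0,1] and all y ∈ (0,1]: φ_p(α y) ≥ C √α · φ_p(y). -/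
/-!
The constant `C = 1` works. The pointwise infimum of all convex majorants of `ζ^p` need not be
convex, and on `(0, 1]` it is `ζ^p` itself: `ζ` is increasing with decreasing derivative, so `ζ^p`
lies below a hinge `z ↦ ζ(x)^p + M max(0, z - x)`, which is convex and touches `ζ^p` at `x`
(`convEnv_eq`). Hence `φ_p = ζ` on `(0, 1]`.

For `ζ`, substitute `u = α v` in the integral up to `α y`: this produces a factor `√α` and replaces
`log (1 + 1 / v²)` by the larger `log (1 + 1 / (α v)²)` (`zeta_scaling`). Comparing the integrals
requires integrability at `0`, where the integrand is `O(u^{-3/4})` (`zetaIntegrand_le`).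
-/

noncomputable section

open scoped BigOperators
open MeasureTheory Filter Matrix

namespace PaperFV

open G

/-- The integrand of `ζ`, without the constant `1/(2√2)`. -/
def zetaIntegrand (u : ℝ) : ℝ := Real.sqrt (Real.log (1 + 1 / u ^ 2) / u)

lemma zetaIntegrand_nonneg (u : ℝ) : 0 ≤ zetaIntegrand u := Real.sqrt_nonneg _

lemma log_one_add_nonneg (u : ℝ) : 0 ≤ Real.log (1 + 1 / u ^ 2) :=
  Real.log_nonneg (by have : 0 ≤ 1 / u ^ 2 := by positivity
                      linarith)

lemma log_one_add_anti {u v : ℝ} (hu : 0 < u) (huv : u ≤ v) :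
    Real.log (1 + 1 / v ^ 2) ≤ Real.log (1 + 1 / u ^ 2) := by
  have : 0 < v := hu.trans_le huv
  apply Real.log_le_log (by positivity)
  gcongr

lemma zetaIntegrand_anti {u v : ℝ} (hu : 0 < u) (huv : u ≤ v) :
    zetaIntegrand v ≤ zetaIntegrand u :=
  Real.sqrt_le_sqrt (div_le_div₀ (log_one_add_nonneg u) (log_one_add_anti hu huv) hu huv)

/-- Since `log t ≤ 4 t^{1/4}`, the singularity of the integrand at `0` is no worse than `u^{-3/4}`,
hence integrable. -/
lemma zetaIntegrand_le {u : ℝ} (hu : 0 < u) (hu1 : u ≤ 1) :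
    zetaIntegrand u ≤ 3 * u ^ (-(3 / 4) : ℝ) := by
  have h1 : Real.log (1 + 1 / u ^ 2) ≤ (1 + 1 / u ^ 2) ^ (1 / 4 : ℝ) / (1 / 4) :=
    Real.log_le_rpow_div (by positivity) (by norm_num)
  have h2 : (1 + 1 / u ^ 2 : ℝ) ≤ 2 ^ 4 * u ^ (-2 : ℝ) := by
    rw [Real.rpow_neg hu.le, Real.rpow_two, one_div]
    have : 1 ≤ (u ^ 2)⁻¹ := (one_le_inv₀ (by positivity)).2 (by nlinarith)
    linarith
  have h3 : (1 + 1 / u ^ 2 : ℝ) ^ (1 / 4 : ℝ) ≤ 2 * u ^ (-(1 / 2) : ℝ) := by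
    refine (Real.rpow_le_rpow (by positivity) h2 (by norm_num)).trans_eq ?_
    rw [Real.mul_rpow (by positivity) (by positivity), ← Real.rpow_mul hu.le,
      ← Real.rpow_natCast, ← Real.rpow_mul (by norm_num)]
    norm_num
  rw [zetaIntegrand, Real.sqrt_le_left (by positivity)]
  have h4 : (3 * u ^ (-(3 / 4) : ℝ)) ^ 2 = 9 * u ^ (-(1 / 2) : ℝ) / u := by
    rw [mul_pow, ← Real.rpow_natCast (u ^ _), ← Real.rpow_mul hu.le, mul_div_assoc,
      ← Real.rpow_sub_one hu.ne']
    norm_num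
  rw [h4]
  gcongr
  have : 0 ≤ u ^ (-(1 / 2) : ℝ) := by positivity
  linarith

lemma zetaIntegrand_intervalIntegrable {x : ℝ} (hx : 0 ≤ x) (hx1 : x ≤ 1) :
    IntervalIntegrable zetaIntegrand volume 0 x := by
  have h : IntervalIntegrable (fun u : ℝ => 3 * u ^ (-(3 / 4) : ℝ)) volume 0 x :=
    (intervalIntegral.intervalIntegrable_rpow' (by norm_num)).const_mul 3
  refine h.mono_fun (Measurable.aestronglyMeasurable (by unfold zetaIntegrand; fun_prop)) ?_
  rw [Set.uIoc_of_le hx]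
  refine (ae_restrict_iff' measurableSet_Ioc).2 (Eventually.of_forall fun u hu => ?_)
  beta_reduce
  rw [Real.norm_of_nonneg (zetaIntegrand_nonneg u)]
  exact (zetaIntegrand_le hu.1 (hu.2.trans hx1)).trans (le_abs_self _)

lemma zeta_eq (x : ℝ) :
    zeta x = (1 / (2 * Real.sqrt 2)) * ∫ u in (0:ℝ)..x, zetaIntegrand u := rfl

lemma zeta_nonneg {x : ℝ} (hx : 0 ≤ x) : 0 ≤ zeta x := by
  rw [zeta_eq]
  have := intervalIntegral.integral_nonneg (μ := volume) hx fun u _ => zetaIntegrand_nonneg u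
  positivity

lemma zeta_sub {x z : ℝ} (hx : 0 ≤ x) (hxz : x ≤ z) (hz : z ≤ 1) :
    zeta z - zeta x = (1 / (2 * Real.sqrt 2)) * ∫ u in x..z, zetaIntegrand u := by
  rw [zeta_eq, zeta_eq, ← mul_sub, intervalIntegral.integral_interval_sub_left
    (zetaIntegrand_intervalIntegrable (hx.trans hxz) hz)
    (zetaIntegrand_intervalIntegrable hx (hxz.trans hz))]

lemma zeta_mono {x z : ℝ} (hx : 0 ≤ x) (hxz : x ≤ z) (hz : z ≤ 1) : zeta x ≤ zeta z := by
  have := intervalIntegral.integral_nonneg (μ := volume) hxz fun u _ => zetaIntegrand_nonneg u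
  rw [← sub_nonneg, zeta_sub hx hxz hz]
  positivity

/-- To the right of `x > 0`, `ζ` grows at most linearly, because its derivative is decreasing. -/
lemma zeta_sub_le {x z : ℝ} (hx : 0 < x) (hxz : x ≤ z) (hz : z ≤ 1) :
    zeta z - zeta x ≤ (1 / (2 * Real.sqrt 2)) * zetaIntegrand x * (z - x) := by
  rw [zeta_sub hx.le hxz hz, mul_assoc]
  gcongr
  have hi : IntervalIntegrable zetaIntegrand volume x z :=
    (zetaIntegrand_intervalIntegrable hx.le (hxz.trans hz)).symm.trans
      (zetaIntegrand_intervalIntegrable (hx.le.trans hxz) hz)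
  refine (intervalIntegral.integral_mono_on hxz hi
    (intervalIntegrable_const (c := zetaIntegrand x))
    fun u hu => zetaIntegrand_anti hx hu.1).trans_eq ?_
  rw [intervalIntegral.integral_const, smul_eq_mul, mul_comm]

/-- The tangent-line inequality for `t ↦ t ^ p` at `b`, that is, Bernoulli's inequality
for `a / b`. -/
lemma rpow_sub_rpow_le {p a b : ℝ} (hp : 1 < p) (ha : 0 ≤ a) (hab : a ≤ b) :
    b ^ p - a ^ p ≤ p * b ^ (p - 1) * (b - a) := by
  rcases (ha.trans hab).eq_or_lt with hb | hb
  · obtain rfl : a = 0 := le_antisymm (hab.trans hb.ge) ha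
    simp [← hb]
  · have h := one_add_mul_self_le_rpow_one_add (s := a / b - 1) (p := p)
      (by have : 0 ≤ a / b := by positivity
          linarith) hp.le
    rw [add_sub_cancel, Real.div_rpow ha hb.le, le_div_iff₀ (by positivity)] at h
    rw [Real.rpow_sub_one hb.ne']
    have : (1 + p * (a / b - 1)) * b ^ p = b ^ p - p * (b ^ p / b) * (b - a) := by
      field_simp
      ring
    linarith

/-- Away from `0` the infimum of the convex majorants of `ζ^p` is `ζ^p` itself: it is attained
at `x` by a hinge `z ↦ ζ(x)^p + M max(0, z - x)` with `M` large. -/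
lemma convEnv_eq {p x : ℝ} (hp : 1 < p) (hx : 0 < x) (hx1 : x ≤ 1) :
    convEnv p x = zeta x ^ p := by
  set M : ℝ := p * zeta 1 ^ (p - 1) * ((1 / (2 * Real.sqrt 2)) * zetaIntegrand x) with hM
  have h1 : 0 ≤ zeta 1 := zeta_nonneg zero_le_one
  have hM0 : 0 ≤ M := by
    have := zetaIntegrand_nonneg x
    positivity
  have hx' : x ∈ Set.Icc (0:ℝ) 1 := ⟨hx.le, hx1⟩
  refine IsLeast.csInf_eq ⟨⟨fun z => zeta x ^ p + M * max 0 (z - x), ?_, ?_, by simp⟩, ?_⟩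
  · refine (convexOn_const _ (convex_Icc 0 1)).add (ConvexOn.smul hM0 ?_)
    exact (convexOn_const _ (convex_Icc 0 1)).sup
      ((convexOn_id (convex_Icc 0 1)).sub (concaveOn_const _ (convex_Icc 0 1)))
  · rintro z ⟨hz0, hz1⟩
    beta_reduce
    rcases le_total z x with hzx | hxz
    · rw [max_eq_left (by linarith), mul_zero, add_zero]
      exact Real.rpow_le_rpow (zeta_nonneg hz0) (zeta_mono hz0 hzx hx1) (by linarith)
    · rw [max_eq_right (by linarith)]
      have hmono := zeta_mono hx.le hxz hz1
      have hz := zeta_nonneg hz0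
      have hb : zeta z ^ (p - 1) ≤ zeta 1 ^ (p - 1) :=
        Real.rpow_le_rpow hz (zeta_mono hz0 hz1 le_rfl) (by linarith)
      have key : p * zeta z ^ (p - 1) * (zeta z - zeta x) ≤
          p * zeta 1 ^ (p - 1) * ((1 / (2 * Real.sqrt 2)) * zetaIntegrand x * (z - x)) :=
        mul_le_mul (by gcongr) (zeta_sub_le hx hxz hz1) (by linarith) (by positivity)
      have := rpow_sub_rpow_le hp (zeta_nonneg hx.le) hmono
      rw [← mul_assoc, ← hM] at key
      linarith
  · rintro _ ⟨g, -, hg, rfl⟩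
    exact hg x hx'

lemma phiP_eq {p x : ℝ} (hp : 1 < p) (hx : 0 < x) (hx1 : x ≤ 1) : phiP p x = zeta x := by
  rw [phiP, convEnv_eq hp hx hx1, one_div,
    Real.rpow_rpow_inv (zeta_nonneg hx.le) (by linarith)]

lemma zetaIntegrand_scaling {α v : ℝ} (hα : 0 < α) (hα1 : α ≤ 1) (hv : 0 < v) :
    Real.sqrt α * zetaIntegrand v ≤ α * zetaIntegrand (α * v) := by
  have h := log_one_add_anti (mul_pos hα hv) (mul_le_of_le_one_left hv.le hα1)
  calc Real.sqrt α * zetaIntegrand v = Real.sqrt (α * (Real.log (1 + 1 / v ^ 2) / v)) :=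
        (Real.sqrt_mul hα.le _).symm
    _ ≤ Real.sqrt (α * (Real.log (1 + 1 / (α * v) ^ 2) / v)) := by gcongr
    _ = Real.sqrt (α ^ 2 * (Real.log (1 + 1 / (α * v) ^ 2) / (α * v))) := by
        congr 1
        field_simp
    _ = α * zetaIntegrand (α * v) := by
        rw [Real.sqrt_mul (by positivity), Real.sqrt_sq hα.le, zetaIntegrand]

/-- The substitution `u = α v` reduces the scaling of `ζ` to that of its integrand. -/
lemma zeta_scaling {α y : ℝ} (hα : 0 < α) (hα1 : α ≤ 1) (hy : 0 < y) (hy1 : y ≤ 1) :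
    Real.sqrt α * zeta y ≤ zeta (α * y) := by
  have hsub : ∫ u in (0:ℝ)..(α * y), zetaIntegrand u =
      ∫ v in (0:ℝ)..y, α * zetaIntegrand (α * v) := by
    rw [intervalIntegral.integral_const_mul,
      intervalIntegral.integral_comp_mul_left zetaIntegrand hα.ne', mul_zero, smul_eq_mul,
      mul_inv_cancel_left₀ hα.ne']
  have hint : IntervalIntegrable (fun v => α * zetaIntegrand (α * v)) volume 0 y := by
    have := (zetaIntegrand_intervalIntegrable (mul_pos hα hy).le
      (mul_le_one₀ hα1 hy.le hy1)).comp_mul_left (c := α)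
    rw [zero_div, mul_div_cancel_left₀ _ hα.ne'] at this
    exact this.const_mul α
  rw [zeta_eq, zeta_eq, hsub, mul_left_comm, ← intervalIntegral.integral_const_mul]
  gcongr
  exact intervalIntegral.integral_mono_on_of_le_Ioo hy.le
    ((zetaIntegrand_intervalIntegrable hy.le hy1).const_mul _) hint
    fun v hv => zetaIntegrand_scaling hα hα1 hv.1

/-- `φ_p(α y) ≥ C √α φ_p(y)` for `α, y ∈ (0,1]`. -/
theorem phiP_scaling (p : ℝ) (hp : 2 < p ∧ p < 3) :
    ∃ C : ℝ, 0 < C ∧ ∀ α y : ℝ, α ∈ Set.Ioc (0 : ℝ) 1 → y ∈ Set.Ioc (0 : ℝ) 1 →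
      C * Real.sqrt α * phiP p y ≤ phiP p (α * y) := by
  have hp1 : 1 < p := by linarith [hp.1]
  refine ⟨1, one_pos, fun α y hα hy => ?_⟩
  rw [one_mul, phiP_eq hp1 hy.1 hy.2,
    phiP_eq hp1 (mul_pos hα.1 hy.1) (mul_le_one₀ hα.2 hy.1.le hy.2)]
  exact zeta_scaling hα.1 hα.2 hy.1 hy.2

end PaperFV
end
end

section
/- Let (Ω, 𝓕, ℙ) be a probability space, let Z be an integrable random variable with Z ≥ 1 almost surely, and let C > 0. Define M := 2C ∫₀¹ √( log(1 + Z/v⁴) ) dv. Then there exists λ > 0 such that 𝔼[ exp(λ M²) ] < ∞. -/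
/-! For `z ≥ 1` and `v ∈ (0, 1]` one has `1 + z / v⁴ ≤ 2z / v⁴`, hence
`log (1 + z / v⁴) ≤ log (2z) + 4 log (1 / v) ≤ log (2z) + 4 / v`. Taking square roots and
integrating in `v` gives `∫₀¹ √(log (1 + z / v⁴)) dv ≤ √(log (2z)) + 4`, so
`M² ≤ 4C² (2 log (2Z) + 32)`. With `λ = 1 / (8C²)` this yields
`exp (λ M²) ≤ exp (log (2Z) + 16) = 2 e¹⁶ Z`, which is integrable. -/


noncomputable section

open scoped BigOperators
open MeasureTheory Filter Matrix

namespace PaperFV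

open G

/-- The factor `√(1 / v)` in place of `√(log (1 / v))` is crude but has an elementary integral. -/
theorem sqrt_log_le {z v : ℝ} (hz : 1 ≤ z) (hv : 0 < v) (hv1 : v ≤ 1) :
    Real.sqrt (Real.log (1 + z / v ^ 4)) ≤
      Real.sqrt (Real.log (2 * z)) + 2 * v ^ (-(1 / 2) : ℝ) := by
  have hlog : Real.log (1 + z / v ^ 4) ≤ Real.log (2 * z) + 4 * v⁻¹ := by
    have h1 : 1 + z / v ^ 4 ≤ 2 * z * v⁻¹ ^ 4 := by
      have h2 : 1 ≤ z / v ^ 4 := by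
        rw [le_div_iff₀ (by positivity)]
        linarith [pow_le_one₀ hv.le hv1 (n := 4)]
      have h3 : 2 * z * v⁻¹ ^ 4 = 2 * (z / v ^ 4) := by field_simp
      linarith
    calc Real.log (1 + z / v ^ 4) ≤ Real.log (2 * z * v⁻¹ ^ 4) :=
          Real.log_le_log (by positivity) h1
      _ = Real.log (2 * z) + 4 * Real.log v⁻¹ := by
          rw [Real.log_mul (by positivity) (by positivity), Real.log_pow]
          norm_num
      _ ≤ _ := by
          gcongr
          exact Real.log_le_self (by positivity)
  have hpow : (v ^ (-(1 / 2) : ℝ)) ^ 2 = v⁻¹ := by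
    rw [← Real.rpow_natCast, ← Real.rpow_mul hv.le, ← Real.rpow_neg_one]
    norm_num
  have hnn : 0 ≤ v ^ (-(1 / 2) : ℝ) := Real.rpow_nonneg hv.le _
  have hl0 : 0 ≤ Real.log (2 * z) := Real.log_nonneg (by linarith)
  apply Real.sqrt_le_iff.2 ⟨by positivity, ?_⟩
  nlinarith [Real.sq_sqrt hl0, mul_nonneg (Real.sqrt_nonneg (Real.log (2 * z))) hnn]

theorem integral_sqrt_log_le {z : ℝ} (hz : 1 ≤ z) :
    ∫ v in Set.Ioc (0 : ℝ) 1, Real.sqrt (Real.log (1 + z / v ^ 4)) ≤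
      Real.sqrt (Real.log (2 * z)) + 4 := by
  have hint : IntegrableOn (fun v : ℝ => v ^ (-(1 / 2) : ℝ)) (Set.Ioc 0 1) :=
    (intervalIntegrable_iff_integrableOn_Ioc_of_le zero_le_one).1
      (intervalIntegral.intervalIntegrable_rpow' (by norm_num))
  have hval : ∫ v in Set.Ioc (0 : ℝ) 1, v ^ (-(1 / 2) : ℝ) = 2 := by
    rw [← intervalIntegral.integral_of_le zero_le_one, integral_rpow (Or.inl (by norm_num))]
    norm_num
  have hconst : IntegrableOn (fun _ : ℝ => Real.sqrt (Real.log (2 * z))) (Set.Ioc (0 : ℝ) 1) :=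
    integrableOn_const (by simp)
  calc ∫ v in Set.Ioc (0 : ℝ) 1, Real.sqrt (Real.log (1 + z / v ^ 4))
      ≤ ∫ v in Set.Ioc (0 : ℝ) 1,
          (Real.sqrt (Real.log (2 * z)) + 2 * v ^ (-(1 / 2) : ℝ)) := by
        apply integral_mono_of_nonneg
        · exact Eventually.of_forall fun _ => Real.sqrt_nonneg _
        · exact hconst.add (hint.const_mul 2)
        · filter_upwards [ae_restrict_mem measurableSet_Ioc] with v hv
          exact sqrt_log_le hz hv.1 hv.2
    _ = _ := by
        rw [integral_add hconst (hint.const_mul 2), integral_const_mul, hval]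
        simp
        norm_num

/-- If `Z ≥ 1` is integrable and
`M = 2C ∫₀¹ √(log(1 + Z/v⁴)) dv`, then `E[exp(λ M²)] < ∞` for some `λ > 0`. -/
theorem exp_M_sq_integrable {Ω : Type*} {m : MeasurableSpace Ω}
    (μ : Measure Ω) [IsProbabilityMeasure μ]
    (Z : Ω → ℝ) (hZ_int : Integrable Z μ) (hZ_one : ∀ᵐ ω ∂μ, 1 ≤ Z ω)
    (C : ℝ) (hC : 0 < C) :
    ∃ lam : ℝ, 0 < lam ∧
      (∫⁻ ω, ENNReal.ofReal (Real.exp (lam *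
        (2 * C * ∫ v in Set.Ioc (0 : ℝ) 1,
          Real.sqrt (Real.log (1 + Z ω / v ^ 4))) ^ 2)) ∂μ) < ⊤ := by
  refine ⟨1 / (8 * C ^ 2), by positivity, ?_⟩
  have hfin : Integrable (fun ω => 2 * Real.exp 16 * Z ω) μ := hZ_int.const_mul _
  refine lt_of_le_of_lt (lintegral_mono_ae ?_) hfin.lintegral_lt_top
  filter_upwards [hZ_one] with ω hω
  apply ENNReal.ofReal_le_ofReal
  set I := ∫ v in Set.Ioc (0 : ℝ) 1, Real.sqrt (Real.log (1 + Z ω / v ^ 4))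
  have hI0 : 0 ≤ I := integral_nonneg fun _ => Real.sqrt_nonneg _
  have hI : I ≤ Real.sqrt (Real.log (2 * Z ω)) + 4 := integral_sqrt_log_le hω
  have hl0 : 0 ≤ Real.log (2 * Z ω) := Real.log_nonneg (by linarith)
  have hsq : I ^ 2 ≤ 2 * Real.log (2 * Z ω) + 32 := by
    have h1 := pow_le_pow_left₀ hI0 hI 2
    nlinarith [Real.sq_sqrt hl0, sq_nonneg (Real.sqrt (Real.log (2 * Z ω)) - 4)]
  have hexp : 1 / (8 * C ^ 2) * (2 * C * I) ^ 2 = I ^ 2 / 2 := by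
    field_simp
    norm_num
  rw [hexp]
  calc Real.exp (I ^ 2 / 2) ≤ Real.exp (Real.log (2 * Z ω) + 16) :=
        Real.exp_le_exp.2 (by linarith)
    _ = 2 * Real.exp 16 * Z ω := by
        rw [Real.exp_add, Real.exp_log (by linarith)]
        ring

end PaperFV
end
end

section
/- There exists a constant C > 0 (depending only on d) such that for all x, y ∈ C₀([0,1], G(ℝ^d)), setting D := sup_{t∈[0,1]} ‖x_t⁻¹ ⊗ y_t‖, one has D ≤ d_∞(x, y) ≤ C ( D + √( D · ‖x‖_∞ ) ). -/
/-!
The homogeneous norm is equivalent to the coordinate gauge: `‖g‖ ≤ r` forces `|g¹ᵢ| ≤ r` and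
`|g²ᵢⱼ| ≤ r²` (`Bd_gnorm`, since these bounds are stable under products of exponentials), and
conversely such bounds give `‖g‖ ≤ (d + 4 d²) r` (`gnorm_le`). For the converse, `g` is
`exp(g¹)` times a central element whose antisymmetric second level is a sum of `d²` elementary ones,
and the elementary one with entry `a` is a commutator of exponentials of vectors of length `√|a|`.

Let `a = x_s⁻¹ y_s`, `b = x_t⁻¹ y_t`, `h = x_{s,t}`. Then `x_{s,t}⁻¹ y_{s,t} = h⁻¹ a⁻¹ h b`.
Conjugating by `h` changes only the second level of `a⁻¹`, by `h¹ (a¹)ᵀ - a¹ (h¹)ᵀ`, which is of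
size `D ‖x‖_∞`. So the first level of the product is `O(D)` and the second `O(D² + D ‖x‖_∞)`
(`Bd_increment`), and the norm equivalence gives the upper bound. The lower bound is the case
`s = 0`. Continuity on a compact interval makes all the suprema finite.
-/

noncomputable section

open scoped BigOperators
open MeasureTheory Filter Matrix

namespace PaperFV

open G

/-! ### Coordinate bounds -/

/-- `Bd g r`: the entries of `g¹` are at most `r` and those of `g²` at most `r²` in absolute value,
that is, `g` lies in the homogeneous box of size `r`. -/
def Bd {d : ℕ} (g : G d) (r : ℝ) : Prop :=
  (∀ i, |g.1.1 i| ≤ r) ∧ ∀ i j, |g.1.2 i j| ≤ r ^ 2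

section

variable {d : ℕ}

lemma Bd.mono {g : G d} {r s : ℝ} (h : Bd g r) (hr : 0 ≤ r) (hrs : r ≤ s) : Bd g s :=
  ⟨fun i => (h.1 i).trans hrs, fun i j => (h.2 i j).trans (by gcongr)⟩

lemma abs_mul_le_of_abs_le {a b r s : ℝ} (ha : |a| ≤ r) (hb : |b| ≤ s) : |a * b| ≤ r * s := by
  rw [abs_mul]
  exact mul_le_mul ha hb (abs_nonneg b) ((abs_nonneg a).trans ha)

lemma Bd.mul {g h : G d} {r s : ℝ} (hg : Bd g r) (hh : Bd h s) (hr : 0 ≤ r) (hs : 0 ≤ s) :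
    Bd (G.mul g h) (r + s) := by
  refine ⟨fun i => ?_, fun i j => ?_⟩
  · exact (abs_add_le _ _).trans (add_le_add (hg.1 i) (hh.1 i))
  · have h1 := abs_mul_le_of_abs_le (hg.1 i) (hh.1 j)
    have h2 : |g.1.2 i j + g.1.1 i * h.1.1 j + h.1.2 i j| ≤ r ^ 2 + r * s + s ^ 2 :=
      (abs_add_le _ _).trans (add_le_add ((abs_add_le _ _).trans
        (add_le_add (hg.2 i j) h1)) (hh.2 i j))
    have h3 : |(G.mul g h).1.2 i j| ≤ r ^ 2 + r * s + s ^ 2 := h2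
    nlinarith [mul_nonneg hr hs]

lemma Bd.inv {g : G d} {r : ℝ} (hg : Bd g r) (hr : 0 ≤ r) : Bd (G.inv g) (2 * r) := by
  refine ⟨fun i => ?_, fun i j => ?_⟩
  · have h : |(G.inv g).1.1 i| = |g.1.1 i| := abs_neg _
    linarith [hg.1 i]
  · have h1 := abs_mul_le_of_abs_le (hg.1 i) (hg.1 j)
    have h2 : |g.1.1 i * g.1.1 j - g.1.2 i j| ≤ r * r + r ^ 2 :=
      (abs_sub _ _).trans (add_le_add h1 (hg.2 i j))
    have h3 : |(G.inv g).1.2 i j| ≤ r * r + r ^ 2 := h2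
    nlinarith [sq_nonneg r]

lemma enorm_nonneg' (v : Vec d) : 0 ≤ enorm v := Real.sqrt_nonneg _

lemma abs_le_enorm (v : Vec d) (i : Fin d) : |v i| ≤ enorm v := by
  refine Real.abs_le_sqrt ?_
  exact Finset.single_le_sum (f := fun i => v i ^ 2) (fun _ _ => sq_nonneg _) (Finset.mem_univ i)

lemma Bd_gexp (v : Vec d) : Bd (gexp v) (enorm v) := by
  refine ⟨fun i => abs_le_enorm v i, fun i j => ?_⟩
  have h1 := abs_mul_le_of_abs_le (abs_le_enorm v i) (abs_le_enorm v j)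
  have h2 : |(gexp v).1.2 i j| = 2⁻¹ * |v i * v j| := by
    change |(2⁻¹ : ℝ) * (v i * v j)| = _
    rw [abs_mul, abs_of_pos (by norm_num)]
  nlinarith [abs_nonneg (v i * v j)]

lemma sum_enorm_nonneg (l : List (Vec d)) : 0 ≤ (l.map enorm).sum :=
  List.sum_nonneg (by simpa using fun v _ => enorm_nonneg' v)

lemma Bd_prodL (l : List (Vec d)) : Bd (prodL (l.map gexp)) ((l.map enorm).sum) := by
  induction l with
  | nil => exact ⟨fun i => by simp [prodL, G.one], fun i j => by simp [prodL, G.one]⟩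
  | cons v l ih =>
    simpa [prodL] using (Bd_gexp v).mul ih (enorm_nonneg' v) (sum_enorm_nonneg l)

lemma gnorm_nonneg (g : G d) : 0 ≤ gnorm g :=
  Real.sInf_nonneg (by rintro r ⟨l, -, rfl⟩; exact sum_enorm_nonneg l)

/-! ### Factorization into exponentials -/

/-- `Rep v B L`: the pair `(v, B)` is a finite product of exponentials of total length at most `L`.
Working with pairs avoids carrying membership proofs of the group. -/
def Rep (v : Vec d) (B : Mat d) (L : ℝ) : Prop :=
  ∃ l : List (Vec d), (prodL (l.map gexp)).1 = (v, B) ∧ (l.map enorm).sum ≤ L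

lemma prodL_append (l m : List (Vec d)) :
    (prodL ((l ++ m).map gexp)).1 = (G.mul (prodL (l.map gexp)) (prodL (m.map gexp))).1 := by
  induction l with
  | nil => ext <;> simp [prodL, G.mul, G.one]
  | cons v l ih =>
    have h1 := congrArg Prod.fst ih
    have h2 := congrArg Prod.snd ih
    simp only [G.mul] at h1 h2
    simp only [List.cons_append, List.map_cons, prodL, G.mul, h1, h2]
    ext i
    · simp only [Pi.add_apply]; ring
    · simp only [Matrix.add_apply, Matrix.vecMulVec_apply, Pi.add_apply]; ring

lemma Rep.mul {v w : Vec d} {A B : Mat d} {L M : ℝ} (h : Rep v A L) (k : Rep w B M) :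
    Rep (v + w) (A + Matrix.vecMulVec v w + B) (L + M) := by
  obtain ⟨l, hl, hL⟩ := h
  obtain ⟨m, hm, hM⟩ := k
  refine ⟨l ++ m, ?_, by simpa using add_le_add hL hM⟩
  rw [prodL_append]
  simp only [G.mul, hl, hm]

lemma Rep_exp (v : Vec d) : Rep v ((2⁻¹ : ℝ) • Matrix.vecMulVec v v) (enorm v) := by
  refine ⟨[v], ?_, by simp⟩
  ext <;> simp [prodL, G.mul, G.one, gexp, Matrix.vecMulVec_apply]

lemma enorm_neg' (v : Vec d) : enorm (-v) = enorm v := by simp [enorm]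

/-- The commutator of two exponentials is central, with second level `v wᵀ - w vᵀ`. -/
lemma Rep_commutator (v w : Vec d) :
    Rep 0 (Matrix.vecMulVec v w - Matrix.vecMulVec w v) (2 * enorm v + 2 * enorm w) := by
  have h := (((Rep_exp v).mul (Rep_exp w)).mul (Rep_exp (-v))).mul (Rep_exp (-w))
  rw [enorm_neg', enorm_neg'] at h
  convert h using 1
  · ext i; simp
  · ext i j
    simp [Matrix.vecMulVec_apply]
    ring
  · ring

lemma enorm_single (i : Fin d) (c : ℝ) : enorm (Pi.single i c : Vec d) = |c| := by
  have h : ∀ k, ((Pi.single i c : Vec d) k) ^ 2 = if k = i then c ^ 2 else 0 := by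
    intro k
    by_cases hk : k = i
    · subst hk; simp
    · simp [hk]
  simp [enorm, h, Real.sqrt_sq_eq_abs]

/-- A single antisymmetric entry `±s` costs length of order `√s`. -/
lemma Rep_single (i j : Fin d) {a s : ℝ} (hs : 0 ≤ s) (ha : |a| ≤ s ^ 2) :
    Rep 0 (a • (Matrix.vecMulVec (Pi.single i 1) (Pi.single j 1) -
      Matrix.vecMulVec (Pi.single j 1) (Pi.single i 1)) : Mat d) (4 * s) := by
  have hsq : √|a| ≤ s := Real.sqrt_le_iff.2 ⟨hs, ha⟩
  -- the sign of `a` is carried by the first of the two vectors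
  obtain ⟨c, hc, hca⟩ : ∃ c : ℝ, |c| = √|a| ∧ c * √|a| = a := by
    rcases le_total 0 a with h | h
    · refine ⟨√|a|, abs_of_nonneg (Real.sqrt_nonneg _), ?_⟩
      rw [Real.mul_self_sqrt (abs_nonneg a), abs_of_nonneg h]
    · refine ⟨-√|a|, by rw [abs_neg, abs_of_nonneg (Real.sqrt_nonneg _)], ?_⟩
      rw [neg_mul, Real.mul_self_sqrt (abs_nonneg a), abs_of_nonpos h, neg_neg]
  obtain ⟨l, hl, hL⟩ := Rep_commutator (Pi.single i c : Vec d) (Pi.single j √|a|)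
  refine ⟨l, ?_, hL.trans ?_⟩
  · rw [hl]
    have e1 : (Pi.single i c : Vec d) = c • Pi.single i 1 := by simp [← Pi.single_smul]
    have e2 : (Pi.single j √|a| : Vec d) = √|a| • Pi.single j 1 := by simp [← Pi.single_smul]
    rw [e1, e2]
    ext p q
    · rfl
    · simp only [Matrix.sub_apply, Matrix.smul_apply, Matrix.vecMulVec_apply, Pi.smul_apply,
        smul_eq_mul]
      linear_combination ((Pi.single i 1 : Vec d) p * (Pi.single j 1 : Vec d) q -
        (Pi.single j 1 : Vec d) p * (Pi.single i 1 : Vec d) q) * hca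
  · rw [enorm_single, enorm_single, hc, abs_of_nonneg (Real.sqrt_nonneg _)]
    linarith

lemma Rep_sum {ι : Type*} (t : Finset ι) (f : ι → Mat d) (L : ℝ) (h : ∀ p, Rep 0 (f p) L) :
    Rep 0 (∑ p ∈ t, f p) (t.card * L) := by
  classical
  induction t using Finset.induction_on with
  | empty => exact ⟨[], by simp [prodL, G.one], by simp⟩
  | insert p t hp ih =>
    have := (h p).mul ih
    rw [Finset.sum_insert hp, Finset.card_insert_of_notMem hp]
    convert this using 1
    · simp
    · ext i j; simp
    · push_cast; ring

lemma enorm_le {v : Vec d} {r : ℝ} (hr : 0 ≤ r) (h : ∀ i, |v i| ≤ r) : enorm v ≤ d * r := by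
  refine Real.sqrt_le_iff.2 ⟨by positivity, ?_⟩
  have h1 : ∑ i, (v i) ^ 2 ≤ ∑ _i : Fin d, r ^ 2 :=
    Finset.sum_le_sum fun i _ => sq_le_sq' (abs_le.1 (h i)).1 (abs_le.1 (h i)).2
  have h2 : (d : ℝ) ≤ (d : ℝ) ^ 2 := by exact_mod_cast Nat.le_self_pow two_ne_zero d
  simp only [Finset.sum_const, Finset.card_univ, Fintype.card_fin, nsmul_eq_mul] at h1
  rw [mul_pow]
  exact h1.trans (by gcongr)

/-- Every group element in the box of size `r` is a product of exponentials of total length at most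
`(d + 4 d²) r`: split off `exp(g¹)`, and write the remaining antisymmetric part of `g²` as a product
of `d²` central commutators. -/
lemma Bd.rep {g : G d} {r : ℝ} (h : Bd g r) (hr : 0 ≤ r) :
    Rep g.1.1 g.1.2 ((d + 4 * d ^ 2) * r) := by
  set A : Fin d → Fin d → ℝ := fun i j => g.1.2 i j - 2⁻¹ * (g.1.1 i * g.1.1 j) with hA
  have hsym : ∀ i j, g.1.2 i j + g.1.2 j i = g.1.1 i * g.1.1 j := fun i j =>
    congrFun (congrFun g.2 i) j
  have hAb : ∀ i j, |2⁻¹ * A i j| ≤ r ^ 2 := by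
    intro i j
    have h1 := abs_le.1 (abs_mul_le_of_abs_le (h.1 i) (h.1 j))
    have h2 := abs_le.1 (h.2 i j)
    simp only [hA]
    rw [abs_le]
    constructor <;> nlinarith [sq_nonneg r, h1.1, h1.2, h2.1, h2.2]
  have h1 := Rep_sum Finset.univ (fun p : Fin d × Fin d => ((2⁻¹ * A p.1 p.2) •
    (Matrix.vecMulVec (Pi.single p.1 1) (Pi.single p.2 1) -
      Matrix.vecMulVec (Pi.single p.2 1) (Pi.single p.1 1)) : Mat d)) (4 * r)
    fun p => Rep_single p.1 p.2 hr (hAb p.1 p.2)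
  obtain ⟨l, hl, hL⟩ := (Rep_exp g.1.1).mul h1
  refine ⟨l, ?_, hL.trans ?_⟩
  · rw [hl]
    ext i j
    · simp
    · simp only [Matrix.add_apply, Matrix.smul_apply, Matrix.vecMulVec_apply, Matrix.sum_apply,
        Matrix.sub_apply, smul_eq_mul, Pi.zero_apply, mul_zero, add_zero, Fintype.sum_prod_type,
        mul_sub, Finset.sum_sub_distrib, Pi.single_apply]
      simp only [mul_ite, mul_one, mul_zero, ← ite_and]
      simp [ite_and]
      simp only [hA]
      linarith [hsym i j, mul_comm (g.1.1 i) (g.1.1 j)]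
  · have := enorm_le hr h.1
    simp only [Finset.card_univ, Fintype.card_prod, Fintype.card_fin, Nat.cast_mul]
    nlinarith

/-! ### Equivalence of the homogeneous norm with the coordinate bounds -/

lemma gnorm_le {g : G d} {r : ℝ} (h : Bd g r) (hr : 0 ≤ r) : gnorm g ≤ (d + 4 * d ^ 2) * r := by
  obtain ⟨l, hl, hL⟩ := h.rep hr
  have hmem : (l.map enorm).sum ∈ { r | ∃ l : List (Vec d), prodL (l.map gexp) = g ∧
      r = (l.map enorm).sum } := ⟨l, Subtype.ext hl, rfl⟩
  refine (csInf_le ⟨0, ?_⟩ hmem).trans hL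
  rintro _ ⟨l, -, rfl⟩
  exact sum_enorm_nonneg l

lemma exists_Bd (g : G d) : Bd g ((∑ i, |g.1.1 i|) + ∑ i, ∑ j, √|g.1.2 i j|) := by
  have h0 : 0 ≤ ∑ i, |g.1.1 i| := Finset.sum_nonneg fun _ _ => abs_nonneg _
  have h1 : ∀ i, 0 ≤ ∑ j, √|g.1.2 i j| := fun i => Finset.sum_nonneg fun _ _ => Real.sqrt_nonneg _
  have h2 : 0 ≤ ∑ i, ∑ j, √|g.1.2 i j| := Finset.sum_nonneg fun i _ => h1 i
  refine ⟨fun i => ?_, fun i j => ?_⟩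
  · have := Finset.single_le_sum (f := fun i => |g.1.1 i|) (fun _ _ => abs_nonneg _)
      (Finset.mem_univ i)
    linarith
  · have h3 := Finset.single_le_sum (f := fun j => √|g.1.2 i j|) (fun _ _ => Real.sqrt_nonneg _)
      (Finset.mem_univ j)
    have h4 := Finset.single_le_sum (f := fun i => ∑ j, √|g.1.2 i j|) (fun i _ => h1 i)
      (Finset.mem_univ i)
    exact (Real.sqrt_le_left (by linarith)).1 (by linarith)

lemma Bd_gnorm (g : G d) : Bd g (gnorm g) := by
  -- without a representation of `g`, the infimum defining `gnorm g` would be the junk value `0`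
  have hne : { r | ∃ l : List (Vec d), prodL (l.map gexp) = g ∧
      r = (l.map enorm).sum }.Nonempty := by
    obtain ⟨l, hl, -⟩ := (exists_Bd g).rep (add_nonneg (Finset.sum_nonneg fun _ _ => abs_nonneg _)
      (Finset.sum_nonneg fun _ _ => Finset.sum_nonneg fun _ _ => Real.sqrt_nonneg _))
    exact ⟨_, l, Subtype.ext hl, rfl⟩
  refine ⟨fun i => ?_, fun i j => ?_⟩
  · refine le_csInf hne ?_
    rintro _ ⟨l, rfl, rfl⟩
    exact (Bd_prodL l).1 i
  · refine (Real.sqrt_le_left (gnorm_nonneg g)).1 (le_csInf hne ?_)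
    rintro _ ⟨l, rfl, rfl⟩
    exact (Real.sqrt_le_left (sum_enorm_nonneg l)).2 ((Bd_prodL l).2 i j)

/-! ### Increments and boundedness of paths -/

lemma IsPath.bounded {x : ℝ → G d} (hx : IsPath x) :
    ∃ M : ℝ, 0 ≤ M ∧ ∀ t ∈ Set.Icc (0 : ℝ) 1, Bd (x t) M := by
  have hf : Continuous fun p : Vec d × Mat d =>
      (∑ i, |p.1 i|) + ∑ i, ∑ j, √|p.2 i j| := by fun_prop
  obtain ⟨M, hM⟩ := (isCompact_Icc.image_of_continuousOn (hf.comp_continuousOn hx.1)).bddAbove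
  refine ⟨max M 0, le_max_right _ _, fun t ht => (exists_Bd (x t)).mono ?_ ?_⟩
  · exact add_nonneg (Finset.sum_nonneg fun _ _ => abs_nonneg _)
      (Finset.sum_nonneg fun _ _ => Finset.sum_nonneg fun _ _ => Real.sqrt_nonneg _)
  · exact (hM ⟨t, ht, rfl⟩).trans (le_max_left _ _)

lemma inv_one_mul (g : G d) : G.mul (G.inv one) g = g := by
  apply Subtype.ext
  ext <;> simp [G.mul, G.inv, G.one]

/-- With `a = x_s⁻¹ y_s`, `b = x_t⁻¹ y_t` and `h = x_{s,t}`, the element `x_{s,t}⁻¹ y_{s,t}` equals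
`h⁻¹ a⁻¹ h b`. Its first level is `b¹ - a¹`, and in its second level `h` enters only through the
bilinear term `h¹ (a¹)ᵀ - a¹ (h¹)ᵀ`; hence the `√(D X)`. -/
lemma Bd_increment (p q u v : G d) {D X : ℝ} (hD : 0 ≤ D) (hX : 0 ≤ X)
    (ha : Bd (G.mul (G.inv p) u) D) (hb : Bd (G.mul (G.inv q) v) D)
    (hh : Bd (G.mul (G.inv p) q) X) :
    Bd (G.mul (G.inv (G.mul (G.inv p) q)) (G.mul (G.inv u) v)) (2 * (D + √(D * X))) := by
  have hsq : 0 ≤ √(D * X) := Real.sqrt_nonneg _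
  have hss : √(D * X) ^ 2 = D * X := Real.sq_sqrt (mul_nonneg hD hX)
  set a := G.mul (G.inv p) u with hadef
  set b := G.mul (G.inv q) v with hbdef
  set h := G.mul (G.inv p) q with hhdef
  refine ⟨fun i => ?_, fun i j => ?_⟩
  · have e : (G.mul (G.inv h) (G.mul (G.inv u) v)).1.1 i = b.1.1 i - a.1.1 i := by
      simp only [hadef, hbdef, hhdef, G.mul, G.inv, Pi.add_apply, Pi.neg_apply]
      ring
    rw [e]
    have := abs_sub (b.1.1 i) (a.1.1 i)
    linarith [ha.1 i, hb.1 i]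
  · have e : (G.mul (G.inv h) (G.mul (G.inv u) v)).1.2 i j =
        (a.1.1 i * a.1.1 j - a.1.2 i j) + (h.1.1 i * a.1.1 j - a.1.1 i * h.1.1 j)
          + b.1.2 i j - a.1.1 i * b.1.1 j := by
      simp only [hadef, hbdef, hhdef, G.mul, G.inv, Pi.add_apply, Pi.neg_apply, Matrix.add_apply,
        Matrix.sub_apply, Matrix.vecMulVec_apply]
      ring
    rw [e]
    have h1 := abs_le.1 (abs_mul_le_of_abs_le (ha.1 i) (ha.1 j))
    have h2 := abs_le.1 (abs_mul_le_of_abs_le (hh.1 i) (ha.1 j))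
    have h3 := abs_le.1 (abs_mul_le_of_abs_le (ha.1 i) (hh.1 j))
    have h4 := abs_le.1 (abs_mul_le_of_abs_le (ha.1 i) (hb.1 j))
    have h5 := abs_le.1 (ha.2 i j)
    have h6 := abs_le.1 (hb.2 i j)
    have h7 : (2 * (D + √(D * X))) ^ 2 = 4 * D ^ 2 + 8 * (D * √(D * X)) + 4 * (D * X) := by
      linear_combination 4 * hss
    have h8 := mul_nonneg hD hsq
    have h9 := mul_nonneg hD hX
    rw [h7, abs_le]
    constructor <;> linarith [h1.1, h1.2, h2.1, h2.2, h3.1, h3.2, h4.1, h4.2, h5.1, h5.2, h6.1,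
      h6.2, mul_comm X D]

end

/-! ### Comparison of the two distances -/

/-- With `D = sup_t ‖x_t⁻¹ ⊗ y_t‖` one has
`D ≤ d_∞(x,y) ≤ C (D + √(D ‖x‖_∞))`. -/
theorem dInf_comparison (d : ℕ) (hd : 2 ≤ d) :
    ∃ C : ℝ, 0 < C ∧ ∀ x y : ℝ → G d, IsPath x → IsPath y →
      ∀ D : ℝ, D = sSup { r | ∃ t ∈ Set.Icc (0 : ℝ) 1, r = gnorm (mul (inv (x t)) (y t)) } →
        D ≤ dInf x y ∧ dInf x y ≤ C * (D + Real.sqrt (D * normInf x)) := by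
  refine ⟨(d + 4 * d ^ 2) * 2, by positivity, ?_⟩
  intro x y hx hy D hD
  obtain ⟨M, hM0, hM⟩ := hx.bounded
  obtain ⟨N, hN0, hN⟩ := hy.bounded
  have hIx : ∀ s t : ℝ, 0 ≤ s → s < t → t ≤ 1 → Bd (inc x s t) (2 * M + M) :=
    fun s t h0 hst h1 => ((hM s ⟨h0, by linarith⟩).inv hM0).mul (hM t ⟨by linarith, h1⟩)
      (by linarith) hM0
  have hIy : ∀ s t : ℝ, 0 ≤ s → s < t → t ≤ 1 → Bd (inc y s t) (2 * N + N) :=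
    fun s t h0 hst h1 => ((hN s ⟨h0, by linarith⟩).inv hN0).mul (hN t ⟨by linarith, h1⟩)
      (by linarith) hN0
  have bD : BddAbove { r | ∃ t ∈ Set.Icc (0 : ℝ) 1, r = gnorm (mul (inv (x t)) (y t)) } := by
    refine ⟨(d + 4 * d ^ 2) * (2 * M + N), ?_⟩
    rintro _ ⟨t, ht, rfl⟩
    exact gnorm_le (((hM t ht).inv hM0).mul (hN t ht) (by linarith) hN0) (by linarith)
  have bX : BddAbove { r | ∃ s t : ℝ, 0 ≤ s ∧ s < t ∧ t ≤ 1 ∧ r = gnorm (inc x s t) } := by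
    refine ⟨(d + 4 * d ^ 2) * (2 * M + M), ?_⟩
    rintro _ ⟨s, t, h0, hst, h1, rfl⟩
    exact gnorm_le (hIx s t h0 hst h1) (by linarith)
  have bI : BddAbove (dInfSet x y) := by
    refine ⟨(d + 4 * d ^ 2) * (2 * (2 * M + M) + (2 * N + N)), ?_⟩
    rintro _ ⟨s, t, h0, hst, h1, rfl⟩
    exact gnorm_le (((hIx s t h0 hst h1).inv (by linarith)).mul (hIy s t h0 hst h1)
      (by linarith) (by linarith)) (by linarith)
  have hD0 : 0 ≤ D := by
    rw [hD]
    exact Real.sSup_nonneg (by rintro _ ⟨t, -, rfl⟩; exact gnorm_nonneg _)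
  have hX0 : 0 ≤ normInf x :=
    Real.sSup_nonneg (by rintro _ ⟨s, t, -, -, -, rfl⟩; exact gnorm_nonneg _)
  have hI0 : 0 ≤ dInf x y :=
    Real.sSup_nonneg (by rintro _ ⟨s, t, -, -, -, rfl⟩; exact gnorm_nonneg _)
  constructor
  · rw [hD]
    refine csSup_le ⟨_, 0, by simp, rfl⟩ ?_
    rintro _ ⟨t, ht, rfl⟩
    rcases ht.1.eq_or_lt with rfl | h0
    · -- `dInf` only sees `s < t`, so `t = 0` is settled by `x 0 = y 0 = e`
      rw [hx.2, hy.2, inv_one_mul]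
      refine le_trans ?_ hI0
      have hB : Bd (one : G d) 0 := ⟨fun i => by simp [G.one], fun i j => by simp [G.one]⟩
      simpa using gnorm_le hB le_rfl
    · refine le_csSup bI ⟨0, t, le_rfl, h0, ht.2, ?_⟩
      rw [inc, inc, hx.2, hy.2, inv_one_mul, inv_one_mul]
  · have key : ∀ t ∈ Set.Icc (0 : ℝ) 1, Bd (mul (inv (x t)) (y t)) D := fun t ht =>
      (Bd_gnorm _).mono (gnorm_nonneg _) (hD ▸ le_csSup bD ⟨t, ht, rfl⟩)
    refine csSup_le ⟨_, 0, 1, le_rfl, one_pos, le_rfl, rfl⟩ ?_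
    rintro _ ⟨s, t, h0, hst, h1, rfl⟩
    have hh : Bd (mul (inv (x s)) (x t)) (normInf x) :=
      (Bd_gnorm _).mono (gnorm_nonneg _) (le_csSup bX ⟨s, t, h0, hst, h1, rfl⟩)
    rw [mul_assoc]
    exact gnorm_le (Bd_increment (x s) (x t) (y s) (y t) hD0 hX0 (key s ⟨h0, by linarith⟩)
      (key t ⟨by linarith, h1⟩) hh) (by positivity)

end PaperFV
end
end
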